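/- arXiv:1402.1752 — 5 statements merged into one kernel-verified Lean document; each statement's English description precedes it below -/
import Mathlib

section
/- Let m > 0 and σ_r, σ_φ be real constants. Define σ : ℝ² → ℝ^{2×2} on coordinates q = (r, φ) by σ₁₁(r,φ) = m σ_r r, σ₂₂(r,φ) = m σ_φ r, σ₁₂ = σ₂₁ = 0, and let γ : ℝ² → ℝ^{2×2} be identically zero. Then the Milstein compatibility conditions for the existence of a stochastic Hamiltonian formulation — namely ∂σ_{i j}/∂p^α + ∂γ_{α j}/∂q^i = 0, ∂σ_{i j}/∂q^α = ∂σ_{α j}/∂q^i for α ≠ i, and ∂γ_{i j}/∂p^α = ∂γ_{α j}/∂p^i for α ≠ i (for i, α ∈ {1,2}, j ∈ {1,2}) — hold at every point (r, φ) ∈ ℝ² if and only if σ_φ = 0. In particular, the Sharma–Parthasarathy stochastic two-body problem (which requires σ_φ ≠ 0) does not possess a stochastic Hamiltonian formulation. -/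
/-- Milstein's compatibility conditions for a stochastic Hamiltonian
formulation, applied to the Sharma–Parthasarathy diffusion coefficients
`σ = diag(m σr r, m σφ r)` (a function of the positions `q = (r, φ)` only)
and `γ ≡ 0`, hold at every point of phase space if and only if `σφ = 0`.
Phase space points are pairs `x = (p, q)`; the partial derivative w.r.t.
`p^α` is `fderiv _ _ x (Pi.single α 1, 0)` and w.r.t. `q^k` it is
`fderiv _ _ x (0, Pi.single k 1)`. -/
theorem sharma_parthasarathy_not_hamiltonian
    (m σr σφ : ℝ) (hm : 0 < m)
    (S G : Fin 2 → Fin 2 → ((Fin 2 → ℝ) × (Fin 2 → ℝ)) → ℝ)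
    (hS : S = fun i j x =>
      if i = 0 ∧ j = 0 then m * σr * x.2 0
      else if i = 1 ∧ j = 1 then m * σφ * x.2 0
      else 0)
    (hG : G = fun _ _ _ => 0) :
    ((∀ (x : (Fin 2 → ℝ) × (Fin 2 → ℝ)) (i α j : Fin 2),
        fderiv ℝ (S i j) x (Pi.single α 1, 0)
          + fderiv ℝ (G α j) x (0, Pi.single i 1) = 0) ∧
     (∀ (x : (Fin 2 → ℝ) × (Fin 2 → ℝ)) (i α j : Fin 2), α ≠ i →
        fderiv ℝ (S i j) x (0, Pi.single α 1)
          = fderiv ℝ (S α j) x (0, Pi.single i 1)) ∧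
     (∀ (x : (Fin 2 → ℝ) × (Fin 2 → ℝ)) (i α j : Fin 2), α ≠ i →
        fderiv ℝ (G i j) x (Pi.single α 1, 0)
          = fderiv ℝ (G α j) x (Pi.single i 1, 0)))
    ↔ σφ = 0 := by
  have key : ∀ (c : ℝ) (x v : (Fin 2 → ℝ) × (Fin 2 → ℝ)),
      fderiv ℝ (fun y : (Fin 2 → ℝ) × (Fin 2 → ℝ) => c * y.2 0) x v = c * v.2 0 := by
    intro c x v
    have h : HasFDerivAt (fun y : (Fin 2 → ℝ) × (Fin 2 → ℝ) => c * y.2 0)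
        (c • ((ContinuousLinearMap.proj (R := ℝ) (φ := fun _ : Fin 2 => ℝ) 0).comp
          (ContinuousLinearMap.snd ℝ (Fin 2 → ℝ) (Fin 2 → ℝ)))) x :=
      (c • ((ContinuousLinearMap.proj (R := ℝ) (φ := fun _ : Fin 2 => ℝ) 0).comp
          (ContinuousLinearMap.snd ℝ (Fin 2 → ℝ) (Fin 2 → ℝ)))).hasFDerivAt
    rw [h.fderiv]
    simp
  have hSd : ∀ (i j : Fin 2) (x v : (Fin 2 → ℝ) × (Fin 2 → ℝ)),
      fderiv ℝ (S i j) x v = (if i = 0 ∧ j = 0 then m * σr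
        else if i = 1 ∧ j = 1 then m * σφ else 0) * v.2 0 := by
    intro i j x v
    rw [← key _ x v]
    congr 2
    subst hS
    funext y
    fin_cases i <;> fin_cases j <;> simp
  have hGd : ∀ (i j : Fin 2) (x v : (Fin 2 → ℝ) × (Fin 2 → ℝ)),
      fderiv ℝ (G i j) x v = 0 := by
    intro i j x v
    subst hG
    simp
  simp only [hSd, hGd]
  constructor
  · rintro ⟨-, h, -⟩
    have := h 0 1 0 1 (by decide)
    simpa [hm.ne'] using this
  · rintro rfl
    refine ⟨by simp, ?_, by simp⟩
    intro x i α j hne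
    fin_cases i <;> fin_cases α <;> fin_cases j <;> simp_all
end

section
/- Let m > 0, k > 0 and σ_r, σ_φ be real constants. On the region {(r, φ, v, w) ∈ ℝ⁴ : r > 0}, define the drift vector field b(r, φ, v, w) = (v, w, r w² − k/(m r²), −2 v w / r) and the energy function H(r, φ, v, w) = (m/2)(v² + r² w²) − k/r. Then at every point with r > 0: (i) the Itô drift of H equals ∇H · b + (1/2)[(σ_r r)² ∂²H/∂v² + (σ_φ/r)² ∂²H/∂w²] = (m/2)(σ_r² r² + σ_φ²); and (ii) the diffusion coefficients of H are (∂H/∂v)(σ_r r) = m r v σ_r and (∂H/∂w)(σ_φ/r) = m r w σ_φ. Hence dH(X_t) = m r v σ_r dB^r_t + m r w σ_φ dB^φ_t + (m/2)(σ_r² r² + σ_φ²) dt, and since the drift (m/2)(σ_r² r² + σ_φ²) is strictly positive, the energy is not a weak first integral of the stochastic two-body problem. -/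
/-- The energy `H(r,φ,v,w) = (m/2)(v² + r² w²) − k/r` is not preserved by the
Sharma–Parthasarathy stochastic two-body problem: at every point with `r > 0`,
(i) its Itô drift `∇H · b + ½[(σr r)² ∂²H/∂v² + (σφ/r)² ∂²H/∂w²]` equals
`(m/2)(σr² r² + σφ²)`, and (ii) its diffusion coefficients are
`(∂H/∂v)(σr r) = m r v σr` and `(∂H/∂w)(σφ/r) = m r w σφ`.
Coordinates: `x = (r, φ, v, w)`. -/
theorem energy_ito_drift_and_diffusion
    (m k σr σφ : ℝ) (hm : 0 < m) (hk : 0 < k)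
    (H : (Fin 4 → ℝ) → ℝ)
    (hH : H = fun x => m / 2 * ((x 2) ^ 2 + (x 0) ^ 2 * (x 3) ^ 2) - k / x 0)
    (b : (Fin 4 → ℝ) → Fin 4 → ℝ)
    (hb : b = fun x => ![x 2, x 3,
      x 0 * (x 3) ^ 2 - k / (m * (x 0) ^ 2),
      -2 * x 2 * x 3 / x 0]) :
    ∀ x : Fin 4 → ℝ, 0 < x 0 →
      ((∑ i : Fin 4, fderiv ℝ H x (Pi.single i 1) * b x i)
        + (1 / 2 : ℝ) *
          ((σr * x 0) ^ 2 *
              fderiv ℝ (fun y => fderiv ℝ H y (Pi.single 2 1)) x (Pi.single 2 1)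
            + (σφ / x 0) ^ 2 *
              fderiv ℝ (fun y => fderiv ℝ H y (Pi.single 3 1)) x (Pi.single 3 1))
        = m / 2 * (σr ^ 2 * (x 0) ^ 2 + σφ ^ 2))
      ∧ fderiv ℝ H x (Pi.single 2 1) * (σr * x 0) = m * x 0 * x 2 * σr
      ∧ fderiv ℝ H x (Pi.single 3 1) * (σφ / x 0) = m * x 0 * x 3 * σφ := by
  have hp : ∀ (i : Fin 4) (y : Fin 4 → ℝ), HasFDerivAt (fun z : Fin 4 → ℝ => z i)
      (ContinuousLinearMap.proj (R := ℝ) (φ := fun _ : Fin 4 => ℝ) i) y :=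
    fun i y => (ContinuousLinearMap.proj (R := ℝ) (φ := fun _ : Fin 4 => ℝ) i).hasFDerivAt
  have key : ∀ y : Fin 4 → ℝ, 0 < y 0 → ∀ u : Fin 4 → ℝ,
      fderiv ℝ H y u = (m * y 0 * (y 3) ^ 2 + k / (y 0) ^ 2) * u 0 + m * y 2 * u 2
        + m * (y 0) ^ 2 * y 3 * u 3 := by
    intro y hy u
    have hne : y 0 ≠ 0 := hy.ne'
    have hi := (hasDerivAt_inv (𝕜 := ℝ) hne).comp_hasFDerivAt y (hp 0 y)
    have h := (((((hp 2 y).pow 2).add (((hp 0 y).pow 2).mul ((hp 3 y).pow 2))).const_mul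
      (m / 2)).sub (hi.const_mul k))
    have hH1 := HasFDerivAt.congr_of_eventuallyEq (f₁ := H) h (by
      refine Filter.Eventually.of_forall fun z => ?_
      simp [hH, div_eq_mul_inv])
    rw [hH1.fderiv]
    simp
    field_simp
    ring
  intro x hx
  have hne : x 0 ≠ 0 := hx.ne'
  have hev : ∀ᶠ y : Fin 4 → ℝ in nhds x, 0 < y 0 :=
    (continuous_apply 0).continuousAt.eventually (lt_mem_nhds hx)
  have e2 : fderiv ℝ (fun y => fderiv ℝ H y (Pi.single 2 1)) x (Pi.single 2 1) = m := by
    have h := HasFDerivAt.congr_of_eventuallyEq (f₁ := (fun y => fderiv ℝ H y (Pi.single 2 1))) ((hp 2 x).const_mul m) (by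
      filter_upwards [hev] with y hy
      rw [key y hy]
      simp)
    rw [h.fderiv]
    simp
  have e3 : fderiv ℝ (fun y => fderiv ℝ H y (Pi.single 3 1)) x (Pi.single 3 1)
      = m * (x 0) ^ 2 := by
    have h := HasFDerivAt.congr_of_eventuallyEq (f₁ := (fun y => fderiv ℝ H y (Pi.single 3 1))) ((((hp 0 x).pow 2).mul (hp 3 x)).const_mul m) (by
      filter_upwards [hev] with y hy
      rw [key y hy]
      simp [mul_assoc])
    rw [h.fderiv]
    simp
  rw [e2, e3]
  have hm0 : m ≠ 0 := hm.ne'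
  simp only [key x hx, Fin.sum_univ_four, hb]
  refine ⟨?_, ?_, ?_⟩
  · simp
    field_simp
    ring
  · simp
    ring
  · simp
    field_simp
end

section
/- Let m > 0, μ > 0, k = m μ, a > 0, 0 < e < 1, and f ∈ ℝ. Set H = −k/(2a) and c = m √(μ/(a(1−e²))). Then for all real numbers R̄, T̄, ρ, τ, χ: (k/(2H²)) · [c (e sin f · R̄ + (1 + e cos f) · T̄) + (m/2)(ρ + τ)] − (k/(2H³)) · c² (e² sin² f · ρ + (1 + e cos f)² · τ + 2 e sin f (1 + e cos f) · χ) = (2 a^{3/2}/√(μ(1−e²))) (e sin f · R̄ + (1 + e cos f) · T̄) + (a²/μ)[(1 + 4 e² sin² f/(1−e²)) ρ + (1 + 4(1 + e cos f)²/(1−e²)) τ] + (8 a²/(μ(1−e²))) e sin f (1 + e cos f) χ; moreover (k/(2H²)) · c = 2 a^{3/2}/√(μ(1−e²)). (Variation of the semi-major axis: substituting the drift and diffusion of the energy into the Itô expansion of a = −k/(2H) yields the stochastic Gauss equation for a.) -/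
open Real

/-- Variation of the semi-major axis: substituting the drift and diffusion of
the energy `H = −k/(2a)` into the Itô expansion of `a = −k/(2H)` yields the
stochastic Gauss equation for the semi-major axis.  Here `ρ = R̃·R̃`,
`τ = T̃·T̃`, `χ = R̃·T̃` and `c = m √(μ/(a(1−e²)))`. -/
theorem stochastic_gauss_semi_major_axis
    (m μ k a e f H c : ℝ)
    (hm : 0 < m) (hμ : 0 < μ) (hk : k = m * μ)
    (ha : 0 < a) (he0 : 0 < e) (he1 : e < 1)
    (hH : H = -k / (2 * a))
    (hc : c = m * Real.sqrt (μ / (a * (1 - e ^ 2)))) :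
    (∀ Rb Tb ρ τ χ : ℝ,
      k / (2 * H ^ 2) *
          (c * (e * sin f * Rb + (1 + e * cos f) * Tb) + m / 2 * (ρ + τ))
        - k / (2 * H ^ 3) *
          (c ^ 2 * (e ^ 2 * sin f ^ 2 * ρ + (1 + e * cos f) ^ 2 * τ
            + 2 * e * sin f * (1 + e * cos f) * χ))
      = 2 * a ^ ((3 : ℝ) / 2) / Real.sqrt (μ * (1 - e ^ 2))
          * (e * sin f * Rb + (1 + e * cos f) * Tb)
        + a ^ 2 / μ * ((1 + 4 * e ^ 2 * sin f ^ 2 / (1 - e ^ 2)) * ρ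
            + (1 + 4 * (1 + e * cos f) ^ 2 / (1 - e ^ 2)) * τ)
        + 8 * a ^ 2 / (μ * (1 - e ^ 2)) * e * sin f * (1 + e * cos f) * χ) ∧
    k / (2 * H ^ 2) * c = 2 * a ^ ((3 : ℝ) / 2) / Real.sqrt (μ * (1 - e ^ 2)) := by
  have hq : 0 < 1 - e ^ 2 := by nlinarith
  have hA : k / (2 * H ^ 2) = 2 * a ^ 2 / (m * μ) := by
    subst hH hk
    field_simp
    try norm_num
  have hB : k / (2 * H ^ 3) = -(4 * a ^ 3 / (m * μ) ^ 2) := by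
    subst hH hk
    field_simp
    try norm_num
  have hc2 : c ^ 2 = m ^ 2 * (μ / (a * (1 - e ^ 2))) := by
    rw [hc, mul_pow, Real.sq_sqrt (by positivity)]
  have h32 : a ^ ((3 : ℝ) / 2) = a * Real.sqrt a := by
    rw [show (3 : ℝ) / 2 = 1 + 1 / 2 by norm_num, Real.rpow_add ha, Real.rpow_one,
      Real.sqrt_eq_rpow]
  have h2 : k / (2 * H ^ 2) * c
      = 2 * a ^ ((3 : ℝ) / 2) / Real.sqrt (μ * (1 - e ^ 2)) := by
    rw [hA, hc, h32, Real.sqrt_div hμ.le, Real.sqrt_mul ha.le, Real.sqrt_mul hμ.le]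
    have h1 := Real.sq_sqrt hμ.le
    have h3 := Real.sq_sqrt ha.le
    have p1 := Real.sqrt_pos.2 hμ
    have p2 := Real.sqrt_pos.2 ha
    have p3 := Real.sqrt_pos.2 hq
    generalize Real.sqrt (1 - e ^ 2) = z at *
    generalize Real.sqrt μ = x at *
    generalize Real.sqrt a = y at *
    rw [← h1, ← h3]
    field_simp
  refine ⟨fun Rb Tb ρ τ χ => ?_, h2⟩
  rw [← h2, hB, hc2, hA]
  generalize 1 - e ^ 2 = q at *
  field_simp
  ring
end

section
/- Let m > 0, μ > 0, k = m μ, a > 0, 0 < e < 1, and f ∈ ℝ. Set H = −k/(2a), M = m √(μ a(1−e²)), r = a(1−e²)/(1 + e cos f), and c = m √(μ/(a(1−e²))). Then for all real numbers R̄, T̄, ρ, τ, χ: (2MH/(e m k²)) · (m r T̄) + (M²/(e m k²)) · [c (e sin f R̄ + (1 + e cos f) T̄) + (m/2)(ρ + τ)] + (H/(e³ m k²)) (m r)² τ − (M⁴/(2 e³ m² k⁴)) c² (e² sin² f ρ + (1 + e cos f)² τ + 2 e sin f (1 + e cos f) χ) + (2M(M²H + m k²)/(e³ m² k⁴)) (m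 r) c ((1 + e cos f) τ + e sin f χ) = √(a(1−e²)/μ) (sin f · R̄ + (cos f + (e + cos f)/(1 + e cos f)) · T̄) + (a(1−e²) cos² f/(2 e μ)) ρ + (a(1−e²)/(μ e)) (2 − (cos f/2)((2 + e cos f)/(1 + e cos f))(cos f + (e + cos f)/(1 + e cos f))) τ + (a(1−e²)/(μ e (1 + e cos f))) (e sin³ f − sin 2f) χ. (Variation of the eccentricity: substituting the drifts and diffusions of the angular momentum and energy into the Itô expansion of e = √(1 + 2M²H/(mk²)) yields the stochastic Gauss equation for e.) -/
open Real

/-- Variation of the eccentricity: substituting the drifts and diffusions of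
the angular momentum `M = m √(μ a(1−e²))` and of the energy `H = −k/(2a)` into
the Itô expansion of `e = √(1 + 2M²H/(mk²))` yields the stochastic Gauss
equation for the eccentricity.  Here `ρ = R̃·R̃`, `τ = T̃·T̃`, `χ = R̃·T̃`,
`r = a(1−e²)/(1+e cos f)` and `c = m √(μ/(a(1−e²)))`. -/
theorem stochastic_gauss_eccentricity
    (m μ k a e f H M r c : ℝ)
    (hm : 0 < m) (hμ : 0 < μ) (hk : k = m * μ)
    (ha : 0 < a) (he0 : 0 < e) (he1 : e < 1)
    (hH : H = -k / (2 * a))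
    (hM : M = m * Real.sqrt (μ * a * (1 - e ^ 2)))
    (hr : r = a * (1 - e ^ 2) / (1 + e * cos f))
    (hc : c = m * Real.sqrt (μ / (a * (1 - e ^ 2)))) :
    ∀ Rb Tb ρ τ χ : ℝ,
      2 * M * H / (e * m * k ^ 2) * (m * r * Tb)
        + M ^ 2 / (e * m * k ^ 2) *
            (c * (e * sin f * Rb + (1 + e * cos f) * Tb) + m / 2 * (ρ + τ))
        + H / (e ^ 3 * m * k ^ 2) * (m * r) ^ 2 * τ
        - M ^ 4 / (2 * e ^ 3 * m ^ 2 * k ^ 4) *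
            (c ^ 2 * (e ^ 2 * sin f ^ 2 * ρ + (1 + e * cos f) ^ 2 * τ
              + 2 * e * sin f * (1 + e * cos f) * χ))
        + 2 * M * (M ^ 2 * H + m * k ^ 2) / (e ^ 3 * m ^ 2 * k ^ 4)
            * (m * r) * c * ((1 + e * cos f) * τ + e * sin f * χ)
      = Real.sqrt (a * (1 - e ^ 2) / μ)
            * (sin f * Rb + (cos f + (e + cos f) / (1 + e * cos f)) * Tb)
        + a * (1 - e ^ 2) * cos f ^ 2 / (2 * e * μ) * ρ
        + a * (1 - e ^ 2) / (μ * e)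
            * (2 - cos f / 2 * ((2 + e * cos f) / (1 + e * cos f))
              * (cos f + (e + cos f) / (1 + e * cos f))) * τ
        + a * (1 - e ^ 2) / (μ * e * (1 + e * cos f))
            * (e * sin f ^ 3 - sin (2 * f)) * χ := by
  intro Rb Tb ρ τ χ
  have h1 : 0 < 1 - e ^ 2 := by nlinarith
  have hq : 0 < 1 + e * cos f := by nlinarith [neg_one_le_cos f, cos_le_one f]
  obtain ⟨p, hp⟩ : ∃ p, p = a * (1 - e ^ 2) := ⟨_, rfl⟩
  have hp0 : 0 < p := by rw [hp]; positivity
  have hM' : M = m * (√μ * √p) := by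
    rw [hM, mul_assoc, ← hp, Real.sqrt_mul hμ.le]
  have hc' : c = m * (√μ / √p) := by
    rw [hc, ← hp, Real.sqrt_div hμ.le]
  have hH' : H = -k * (1 - e ^ 2) / (2 * p) := by
    rw [hH, hp]; field_simp
  rw [← hp] at hr ⊢
  rw [Real.sqrt_div hp0.le]
  have hu : 0 < √μ := Real.sqrt_pos.2 hμ
  have hs : 0 < √p := Real.sqrt_pos.2 hp0
  have hu2 : μ = √μ ^ 2 := (Real.sq_sqrt hμ.le).symm
  have hs2 : p = √p ^ 2 := (Real.sq_sqrt hp0.le).symm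
  have hS : sin f ^ 2 = 1 - cos f ^ 2 := by rw [sin_sq]
  have hS3 : sin f ^ 3 = sin f * (1 - cos f ^ 2) := by rw [← hS]; ring
  clear hM hc hH hp
  rw [sin_two_mul, hS, hS3]
  generalize √μ = u at *
  generalize √p = s at *
  generalize cos f = C at *
  generalize sin f = S at *
  subst hr hH' hM' hc' hk
  subst hu2 hs2
  have hq' := hq.ne'
  obtain ⟨q, hqq⟩ : ∃ q, q = 1 + e * C := ⟨_, rfl⟩
  have hC : C = (q - 1) / e := by rw [hqq]; field_simp; ring
  rw [← hqq] at hq hq' ⊢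
  clear hqq hS hS3
  subst hC
  field_simp
  ring
end

section
/- Let m > 0, k > 0, a > 0, 0 < e < 1, μ = k/m, and f, ω ∈ ℝ; set φ = ω + f, r = a(1−e²)/(1 + e cos f), v = √(μ/(a(1−e²))) e sin f, w = √(μ a(1−e²))/r², A_x = m k e cos ω, A_y = m k e sin ω. Define the diffusion coefficients of the Laplace–Runge–Lenz components: Ã_x has radial coefficient m² r² w sin φ and tangential coefficient m² (2 r² w cos φ + r v sin φ); Ã_y has radial coefficient −m² r² w cos φ and tangential coefficient m² (2 r² w sin φ − r v cos φ). Then the radial and tangential coefficients of (A_x Ã_y − A_y Ã_x)/(A_x² + A_y²) equal, respectively, −√(a(1−e²)/μ) · cos f / e and √(a(1−e²)/μ) · (sin f / e) · (2 + e cos f)/(1 + e cos f). (This identifies the diffusion part of the stochastic Gauss equation for the pericenter ω.) -/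
open Real

/-- Diffusion part of the stochastic Gauss equation for the pericenter `ω`:
the radial and tangential coefficients of `(A_x Ã_y − A_y Ã_x)/(A_x² + A_y²)`
equal `−√(a(1−e²)/μ) cos f / e` and
`√(a(1−e²)/μ) (sin f/e)(2 + e cos f)/(1 + e cos f)` respectively, where
`Ã_x` has radial coefficient `m² r² w sin φ` and tangential coefficient
`m²(2 r² w cos φ + r v sin φ)`, and `Ã_y` has radial coefficient
`−m² r² w cos φ` and tangential coefficient `m²(2 r² w sin φ − r v cos φ)`. -/
theorem stochastic_gauss_pericenter_diffusion
    (m k a e μ f ω φ r v w Ax Ay AxR AxT AyR AyT : ℝ)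
    (hm : 0 < m) (hk : 0 < k) (ha : 0 < a) (he0 : 0 < e) (he1 : e < 1)
    (hμ : μ = k / m) (hφ : φ = ω + f)
    (hr : r = a * (1 - e ^ 2) / (1 + e * cos f))
    (hv : v = Real.sqrt (μ / (a * (1 - e ^ 2))) * e * sin f)
    (hw : w = Real.sqrt (μ * a * (1 - e ^ 2)) / r ^ 2)
    (hAx : Ax = m * k * e * cos ω)
    (hAy : Ay = m * k * e * sin ω)
    (hAxR : AxR = m ^ 2 * r ^ 2 * w * sin φ)
    (hAxT : AxT = m ^ 2 * (2 * r ^ 2 * w * cos φ + r * v * sin φ))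
    (hAyR : AyR = -(m ^ 2) * r ^ 2 * w * cos φ)
    (hAyT : AyT = m ^ 2 * (2 * r ^ 2 * w * sin φ - r * v * cos φ)) :
    (Ax * AyR - Ay * AxR) / (Ax ^ 2 + Ay ^ 2)
        = -(Real.sqrt (a * (1 - e ^ 2) / μ)) * cos f / e ∧
    (Ax * AyT - Ay * AxT) / (Ax ^ 2 + Ay ^ 2)
        = Real.sqrt (a * (1 - e ^ 2) / μ) * (sin f / e)
            * ((2 + e * cos f) / (1 + e * cos f)) := by
  have hp : 0 < a * (1 - e ^ 2) := by
    apply mul_pos ha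
    nlinarith
  have hμ0 : 0 < μ := by rw [hμ]; positivity
  have hd : 0 < 1 + e * cos f := by
    nlinarith [neg_one_le_cos f]
  have hkm : k = m * μ := by rw [hμ]; field_simp
  have hassoc : μ * a * (1 - e ^ 2) = μ * (a * (1 - e ^ 2)) := by ring
  rw [hassoc, Real.sqrt_mul hμ0.le] at hw
  rw [Real.sqrt_div hμ0.le] at hv
  rw [Real.sqrt_div hp.le]
  generalize a * (1 - e ^ 2) = p at *
  have hs0 : 0 < √μ := Real.sqrt_pos.2 hμ0
  have hq0 : 0 < √p := Real.sqrt_pos.2 hp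
  have hs2 : μ = √μ ^ 2 := (Real.sq_sqrt hμ0.le).symm
  have hq2 : p = √p ^ 2 := (Real.sq_sqrt hp.le).symm
  generalize √μ = s at *
  generalize √p = q at *
  have hr0 : 0 < r := by rw [hr]; positivity
  have hrw : r ^ 2 * w = s * q := by rw [hw]; field_simp
  have hrv : r * v = s * q * e * sin f / (1 + e * cos f) := by
    rw [hr, hv, hq2]; field_simp
  have hden : Ax ^ 2 + Ay ^ 2 = (m * k * e) ^ 2 := by
    rw [hAx, hAy]
    linear_combination (m * k * e) ^ 2 * sin_sq_add_cos_sq ω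
  have hk2 : k = m * s ^ 2 := by rw [hkm, hs2]
  have hR : Ax * AyR - Ay * AxR = -(m ^ 3 * k * e * (s * q) * cos f) := by
    rw [hAx, hAy, hAyR, hAxR, hφ, cos_add, sin_add, ← hrw]
    linear_combination (-(m ^ 3 * k * e * (r ^ 2 * w) * cos f)) * sin_sq_add_cos_sq ω
  have hT : Ax * AyT - Ay * AxT
      = m ^ 3 * k * e * (2 * (s * q) * sin f - (r * v) * cos f) := by
    rw [hAx, hAy, hAyT, hAxT, hφ, cos_add, sin_add, ← hrw]
    linear_combination (m ^ 3 * k * e * (2 * (r ^ 2 * w) * sin f - (r * v) * cos f)) *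
      sin_sq_add_cos_sq ω
  rw [hden, hR, hT, hrv, hk2]
  constructor
  · field_simp
  · field_simp
    ring
end
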